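/- Reflection of complements of principal filters in nested multiset nwqos: for every nested multiset nwqo A of one of the forms M(Γ_0), M(Σ_{i=1}^d B_i) with d ≥ 2, M(M(B)), or Σ_{i=1}^d M(B_i) with d ≥ 2 (B and all B_i nested multiset nwqos), every n ≥ 1, and every a ∈ A with |a|_A ≤ n, there exists a reflection r : A/a ↪ R_n(A,a). -/

import Mathlib

/-- Syntax of nested multiset normed wqos (nwqos): the smallest class containing the empty
nwqo `Γ₀` and closed under (binary, hence finite) disjoint sums and the finite-multiset
operation `M(·)`. -/
inductive NMW : Type
  | empty : NMW
  | sum : NMW → NMW → NMW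
  | mset : NMW → NMW

namespace NMW

/-- The carrier of a nested multiset nwqo. -/
def El : NMW → Type
  | .empty => Empty
  | .sum A B => El A ⊕ El B
  | .mset A => Multiset (El A)

/-- The quasi-order of a nested multiset nwqo. On a disjoint sum, elements of different
summands are incomparable; on `M(A)`, `m ≤ m'` iff there is a multiplicity-respecting
injection `f` of `m` into `m'` with `a ≤ f(a)` for every `a ∈ m`. -/
def le : (A : NMW) → El A → El A → Prop
  | .empty, x, _ => x.elim
  | .sum A B, x, y => Sum.LiftRel (fun u v => le A u v) (fun u v => le B u v) x y
  | .mset A, m, m' => ∃ t : Multiset (El A), t ≤ m' ∧ Multiset.Rel (fun u v => le A u v) m t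

/-- The norm of a nested multiset nwqo: `|m| = Σ_{a ∈ m} (1 + |a|)` on multisets. -/
def norm : (A : NMW) → El A → ℕ
  | .empty, x => x.elim
  | .sum A B, x => Sum.elim (norm A) (norm B) x
  | .mset A, m => (m.map (fun a => 1 + norm A a)).sum

/-- `A·d`: the `d`-fold disjoint sum of `A` (the empty sum being `Γ₀`). -/
def ncopy (B : NMW) : ℕ → NMW
  | 0 => .empty
  | 1 => B
  | m + 2 => .sum B (ncopy B (m + 1))

/-- Apply `g` under every summand of the form `M(C)` of a finite disjoint sum of
multiset nwqos, replacing `M(C)` by `M(g C)`. -/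
def mapM (g : NMW → NMW) : NMW → NMW
  | .empty => .empty
  | .sum X Y => .sum (mapM g X) (mapM g Y)
  | .mset C => .mset (g C)

/-- The finite disjoint sum of a list of nwqos. -/
def sumList : List NMW → NMW
  | [] => .empty
  | [X] => X
  | X :: Y :: rest => .sum X (sumList (Y :: rest))

/-- `Σ_{i=1}^d M(B_i)` with `d ≥ 1`: a (nonempty) finite disjoint sum of multiset nwqos. -/
inductive SumOfMsets : NMW → Prop
  | mset (B : NMW) : SumOfMsets (.mset B)
  | sum {X Y : NMW} : SumOfMsets X → SumOfMsets Y → SumOfMsets (.sum X Y)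

/-- The forms of nested multiset nwqos covered by the recursive definition of `R_n(A,a)`:
`M(Γ₀)`, `M(Σ_{i=1}^d B_i)` with `d ≥ 2`, `M(M(B))` (all of which are `M` of something),
or `Σ_{i=1}^d M(B_i)` with `d ≥ 2`. -/
def GoodForm (A : NMW) : Prop :=
  (∃ B : NMW, A = .mset B) ∨
  (∃ X Y : NMW, A = .sum X Y ∧ SumOfMsets X ∧ SumOfMsets Y)

/-- The graph of the recursive definition of `R_n(A,a)`:
(i) `R_n(M(Γ₀), ∅) = Γ₀`;
(ii) if `A = M(B₁ + B₂)` and `b_i` is the restriction of the multiset `a` to elements of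
`B_i`, writing `R_n(M(B_i), b_i) = Σ_j M(B_i^j)`, then
`R_n(A,a) = Σ_j M(B_1^j + B₂) + Σ_j M(B₁ + B_2^j)`;
(iii) if `A = M(M(B))` and `a = {a_1,…,a_d}`, then
`R_n(A,a) = Σ_{i=1}^d M(B·(n−1) + R_n(M(B), a_i))`;
(iv) if `A = A₁ + A₂` and `a` lies in the summand `A_i`, then `R_n(A,a)` replaces that
summand by `R_n(A_i, a)`. -/
inductive RRel (n : ℕ) : (A : NMW) → El A → NMW → Prop
  | base (a : El (.mset .empty)) : RRel n (.mset .empty) a .empty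
  | msum {B₁ B₂ : NMW} (a : Multiset (El B₁ ⊕ El B₂)) {R₁ R₂ : NMW}
      (h₁ : RRel n (.mset B₁) (a.filterMap Sum.getLeft?) R₁)
      (h₂ : RRel n (.mset B₂) (a.filterMap Sum.getRight?) R₂) :
      RRel n (.mset (.sum B₁ B₂)) a
        (.sum (mapM (fun C => .sum C B₂) R₁) (mapM (fun C => .sum B₁ C) R₂))
  | mm {B : NMW} (L : List (Multiset (El B))) (Rs : List NMW)
      (hlen : L.length = Rs.length)
      (h : ∀ (i : ℕ) (hi : i < L.length) (hj : i < Rs.length),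
          RRel n (.mset B) (L.get ⟨i, hi⟩) (Rs.get ⟨i, hj⟩)) :
      RRel n (.mset (.mset B)) (Multiset.ofList L)
        (sumList (Rs.map (fun Ri => .mset (.sum (ncopy B (n - 1)) Ri))))
  | sumL {A₁ A₂ : NMW} (a : El A₁) {R₁ : NMW} (h : RRel n A₁ a R₁) :
      RRel n (.sum A₁ A₂) (Sum.inl a) (.sum R₁ A₂)
  | sumR {A₁ A₂ : NMW} (a : El A₂) {R₂ : NMW} (h : RRel n A₂ a R₂) :
      RRel n (.sum A₁ A₂) (Sum.inr a) (.sum A₁ R₂)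

end NMW

/-!
A multiset over `B₁ + B₂` is a pair of multisets. If `a` has parts `b₁` and `b₂`, then `a ≰ x`
means that `bᵢ ≰ xᵢ` for some `i`, so `M(B₁ + B₂)/a` is a union of two sets, each reflected by the
recursive call in one coordinate and the identity in the other.

In `M(M(B))`, write `#x` for the number of elements of `x`, and suppose first that all elements of
`a` are nonempty. If `a ≰ x`, then, by greedy matching, some `b ∈ a` has fewer than `#a ≤ n`
elements of `x` above it. These are stored as a list in `n - 1` copies of `B`; the other elements
of `x` lie in `M(B)/b`, which is reflected recursively. The empty multiset leaves no trace in a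
copy of `B`, but it can be matched with anything, so storing is still faithful between multisets
of the same cardinality. Now let `a` have `e` empty elements and `f` nonempty ones. If `x`
dominates the latter but not `a`, then `f ≤ #x < f + e`, and the `e` summands coming from the
empty elements receive one cardinality each.
-/

/-- The domination quasi-order on finite multisets: `m` matches injectively into `m'` along `r`. For
`r = NMW.le A` it is the order of `M(A)` by definition. -/
def MsetLE {α β : Type*} (r : α → β → Prop) (m : Multiset α) (m' : Multiset β) : Prop :=
  ∃ t ≤ m', Multiset.Rel r m t

namespace MsetLE

variable {α β γ δ : Type*} {r : α → β → Prop} {s : γ → δ → Prop}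

theorem zero_left (m : Multiset β) : MsetLE r 0 m :=
  ⟨0, m.zero_le, .zero⟩

theorem add {m k : Multiset α} {m' k' : Multiset β} (hm : MsetLE r m m') (hk : MsetLE r k k') :
    MsetLE r (m + k) (m' + k') := by
  obtain ⟨t, htm, ht⟩ := hm
  obtain ⟨u, huk, hu⟩ := hk
  exact ⟨t + u, add_le_add htm huk, ht.add hu⟩

theorem cons {a : α} {b : β} {m : Multiset α} {m' : Multiset β} (hab : r a b)
    (hm : MsetLE r m m') : MsetLE r (a ::ₘ m) (b ::ₘ m') := by
  obtain ⟨t, htm, ht⟩ := hm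
  exact ⟨b ::ₘ t, Multiset.cons_le_cons b htm, ht.cons hab⟩

theorem mono {r' : α → β → Prop} (h : ∀ a b, r a b → r' a b) {m : Multiset α} {m' : Multiset β}
    (hm : MsetLE r m m') : MsetLE r' m m' := by
  obtain ⟨t, htm, ht⟩ := hm
  exact ⟨t, htm, ht.mono fun a _ b _ => h a b⟩

theorem card_le {m : Multiset α} {m' : Multiset β} (h : MsetLE r m m') : m.card ≤ m'.card := by
  obtain ⟨t, htm, ht⟩ := h
  exact (Multiset.card_eq_card_of_rel ht).trans_le (Multiset.card_le_card htm)

theorem left_eq_zero {m : Multiset α} (h : MsetLE r m (0 : Multiset β)) : m = 0 :=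
  Multiset.card_eq_zero.1 (Nat.le_zero.1 h.card_le)

theorem map_iff {f : α → γ} {g : β → δ} {m : Multiset α} {m' : Multiset β} :
    MsetLE s (m.map f) (m'.map g) ↔ MsetLE (fun a b => s (f a) (g b)) m m' := by
  constructor
  · rintro ⟨t, htm, ht⟩
    obtain ⟨v, hv⟩ := Multiset.le_iff_exists_add.1 htm
    have hrel : Multiset.Rel (fun c b => c = g b) (t + v) m' :=
      Multiset.rel_map_right.1 (Multiset.rel_eq.2 hv.symm)
    obtain ⟨t', v', htt', -, rfl⟩ := Multiset.rel_add_left.1 hrel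
    obtain rfl : t = t'.map g := Multiset.rel_eq.1 (Multiset.rel_map_right.2 htt')
    exact ⟨t', Multiset.le_add_right t' v', Multiset.rel_map.1 ht⟩
  · rintro ⟨t, htm, ht⟩
    exact ⟨t.map g, Multiset.map_le_map htm, Multiset.rel_map.2 ht⟩

theorem filterMap {f : α → Option γ} {g : β → Option δ}
    (hfg : ∀ a b, r a b → Option.Rel s (f a) (g b)) {m : Multiset α} {m' : Multiset β}
    (h : MsetLE r m m') : MsetLE s (m.filterMap f) (m'.filterMap g) := by
  obtain ⟨t, htm, ht⟩ := h
  refine ⟨t.filterMap g, Multiset.filterMap_le_filterMap g htm, ?_⟩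
  clear htm
  induction ht with
  | zero => exact .zero
  | @cons a b m t hab _ ih =>
    have hopt := hfg a b hab
    cases hfa : f a <;> cases hgb : g b <;> rw [hfa, hgb] at hopt <;> cases hopt
    case none.none =>
      rwa [Multiset.filterMap_cons_none _ _ hfa, Multiset.filterMap_cons_none _ _ hgb]
    case some.some hcd =>
      rw [Multiset.filterMap_cons_some _ _ _ hfa, Multiset.filterMap_cons_some _ _ _ hgb]
      exact ih.cons hcd

open Classical in
theorem of_card_le_countP {m : Multiset α} {m' : Multiset β}
    (h : ∀ a ∈ m, m.card ≤ m'.countP (r a)) : MsetLE r m m' := by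
  induction m using Multiset.induction_on generalizing m' with
  | empty => exact zero_left m'
  | cons a m ih =>
    have hpos : 0 < m'.countP (r a) :=
      (Nat.succ_pos _).trans_le ((Multiset.card_cons a m).ge.trans (h a (m.mem_cons_self a)))
    obtain ⟨b, hb, hab⟩ := Multiset.countP_pos.1 hpos
    obtain ⟨k, rfl⟩ := Multiset.exists_cons_of_mem hb
    refine cons hab (ih fun c hc => ?_)
    have hcount := h c (Multiset.mem_cons_of_mem hc)
    rw [Multiset.card_cons, Multiset.countP_cons] at hcount
    split_ifs at hcount <;> omega

theorem add_of_forall_rel {m k : Multiset α} {m' : Multiset β} (hm : MsetLE r m m')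
    (hk : ∀ a ∈ k, ∀ b, r a b) (hcard : (m + k).card ≤ m'.card) : MsetLE r (m + k) m' := by
  classical
  obtain ⟨t, htm, ht⟩ := hm
  obtain ⟨v, rfl⟩ := Multiset.le_iff_exists_add.1 htm
  have hkv : k.card ≤ v.card := by
    simpa only [Multiset.card_add, Multiset.card_eq_card_of_rel ht, Nat.add_le_add_iff_left]
      using hcard
  refine add ⟨t, le_rfl, ht⟩ (of_card_le_countP fun a ha => ?_)
  rwa [Multiset.countP_eq_card.2 fun b _ => hk a ha b]

end MsetLE

section Sum

variable {α β γ δ : Type*}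

theorem filterMap_getLeft?_map_inl_add_map_inr (m : Multiset α) (k : Multiset β) :
    (m.map Sum.inl + k.map Sum.inr).filterMap Sum.getLeft? = m := by
  simp [Multiset.filterMap_map, Function.comp_def, Multiset.eq_zero_iff_forall_notMem]

theorem filterMap_getRight?_map_inl_add_map_inr (m : Multiset α) (k : Multiset β) :
    (m.map Sum.inl + k.map Sum.inr).filterMap Sum.getRight? = k := by
  simp [Multiset.filterMap_map, Function.comp_def, Multiset.eq_zero_iff_forall_notMem]

theorem map_inl_filterMap_add_map_inr_filterMap (m : Multiset (α ⊕ β)) :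
    (m.filterMap Sum.getLeft?).map Sum.inl + (m.filterMap Sum.getRight?).map Sum.inr = m := by
  induction m using Multiset.induction_on with
  | empty => rfl
  | cons a m ih => cases a <;> simpa [Multiset.filterMap_cons] using ih

theorem msetLE_liftRel_iff {r : α → γ → Prop} {s : β → δ → Prop}
    {m : Multiset (α ⊕ β)} {m' : Multiset (γ ⊕ δ)} :
    MsetLE (Sum.LiftRel r s) m m' ↔
      MsetLE r (m.filterMap Sum.getLeft?) (m'.filterMap Sum.getLeft?) ∧
      MsetLE s (m.filterMap Sum.getRight?) (m'.filterMap Sum.getRight?) := by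
  constructor
  · intro h
    constructor
    · refine h.filterMap ?_
      rintro _ _ (hac | hbd)
      exacts [.some hac, .none]
    · refine h.filterMap ?_
      rintro _ _ (hac | hbd)
      exacts [.none, .some hbd]
  · rintro ⟨hleft, hright⟩
    rw [← map_inl_filterMap_add_map_inr_filterMap m, ← map_inl_filterMap_add_map_inr_filterMap m']
    exact (MsetLE.map_iff.2 (hleft.mono fun _ _ => .inl)).add
      (MsetLE.map_iff.2 (hright.mono fun _ _ => .inr))

theorem msetLE_liftRel_map_add_map_iff {r : α → γ → Prop} {s : β → δ → Prop}
    {m : Multiset α} {k : Multiset β} {m' : Multiset γ} {k' : Multiset δ} :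
    MsetLE (Sum.LiftRel r s) (m.map .inl + k.map .inr) (m'.map .inl + k'.map .inr) ↔
      MsetLE r m m' ∧ MsetLE s k k' := by
  simp only [msetLE_liftRel_iff, filterMap_getLeft?_map_inl_add_map_inr,
    filterMap_getRight?_map_inl_add_map_inr]

end Sum

theorem exists_coe_append_replicate {α : Type*} (z : α) (a : Multiset α) :
    ∃ (F : List α) (e : ℕ), z ∉ F ∧ ((F ++ List.replicate e z : List α) : Multiset α) = a := by
  classical
  refine ⟨(a.filter (z ≠ ·)).toList, a.count z, fun hz => ?_, ?_⟩
  · exact (Multiset.of_mem_filter (Multiset.mem_toList.1 hz)) rfl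
  · rw [← Multiset.coe_add, Multiset.coe_toList, Multiset.coe_replicate, ← Multiset.filter_eq,
      add_comm, Multiset.filter_add_not]

namespace NMW

theorem norm_mset_add {A : NMW} (m k : Multiset (El A)) :
    norm (.mset A) (m + k : Multiset (El A)) = norm (.mset A) m + norm (.mset A) k := by
  simp only [norm, Multiset.map_add, Multiset.sum_add]

theorem norm_mset_cons {A : NMW} (a : El A) (m : Multiset (El A)) :
    norm (.mset A) (a ::ₘ m : Multiset (El A)) = 1 + norm A a + norm (.mset A) m := by
  simp only [norm, Multiset.map_cons, Multiset.sum_cons]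

theorem norm_le_norm_mset {A : NMW} {a : El A} {m : Multiset (El A)} (ha : a ∈ m) :
    norm A a ≤ norm (.mset A) m := by
  obtain ⟨k, rfl⟩ := Multiset.exists_cons_of_mem ha
  rw [norm_mset_cons]
  omega

theorem card_le_norm_mset {A : NMW} (m : Multiset (El A)) : m.card ≤ norm (.mset A) m := by
  induction m using Multiset.induction_on with
  | empty => exact Nat.zero_le _
  | cons a m ih =>
    rw [norm_mset_cons, Multiset.card_cons]
    omega

theorem norm_mset_sum_map_add_map {A B : NMW} (m : Multiset (El A)) (k : Multiset (El B)) :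
    norm (.mset (.sum A B)) (m.map Sum.inl + k.map Sum.inr : Multiset (El A ⊕ El B)) =
      norm (.mset A) m + norm (.mset B) k := by
  refine (norm_mset_add (A := .sum A B) (m.map Sum.inl) (k.map Sum.inr)).trans ?_
  exact congrArg₂ (· + ·) (congrArg Multiset.sum (Multiset.map_map _ _ _))
    (congrArg Multiset.sum (Multiset.map_map _ _ _))

theorem norm_mset_sum {A B : NMW} (m : Multiset (El A ⊕ El B)) :
    norm (.mset (.sum A B)) m =
      norm (.mset A) (m.filterMap Sum.getLeft?) + norm (.mset B) (m.filterMap Sum.getRight?) := by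
  rw [← norm_mset_sum_map_add_map, map_inl_filterMap_add_map_inr_filterMap]

/-- The carrier `{x ∈ A : a ≰ x}` of the residual `A/a`. -/
def residual (A : NMW) (a : El A) : Set (El A) :=
  {x | ¬ le A a x}

/-- There is a reflection of `S ⊆ A`, with the induced order and norm, into `R`. -/
def ReflectsInto {A : NMW} (S : Set (El A)) (R : NMW) : Prop :=
  ∃ r : S → El R, (∀ x y, le R (r x) (r y) → le A x y) ∧ ∀ x, norm R (r x) ≤ norm A x

/-- There is a reflection into `R` of the Cartesian product `A × B`, ordered componentwise and
normed by `|(x, y)| = |x| + |y|`. It is kept in curried form since nested multiset nwqos are not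
closed under products. -/
def ProdReflectsInto (A B R : NMW) : Prop :=
  ∃ p : El A → El B → El R,
    (∀ x y x' y', le R (p x y) (p x' y') → le A x x' ∧ le B y y') ∧
    ∀ x y, norm R (p x y) ≤ norm A x + norm B y

namespace ReflectsInto

variable {A B X Y : NMW} {S T : Set (El A)}

theorem univ (A : NMW) : ReflectsInto (Set.univ : Set (El A)) A :=
  ⟨Subtype.val, fun _ _ => id, fun _ => le_rfl⟩

theorem empty : ReflectsInto (∅ : Set (El A)) X :=
  ⟨fun x => x.2.elim, fun x => x.2.elim, fun x => x.2.elim⟩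

theorem mono (hST : S ⊆ T) (h : ReflectsInto T X) : ReflectsInto S X := by
  obtain ⟨r, hle, hnorm⟩ := h
  exact ⟨r ∘ Set.inclusion hST, fun x y => hle _ _, fun x => hnorm _⟩

theorem image {f : El A → El B} (hle : ∀ x y, le A x y → le B (f x) (f y))
    (hnorm : ∀ x, norm A x ≤ norm B (f x)) (h : ReflectsInto S X) : ReflectsInto (f '' S) X := by
  obtain ⟨r, hr_le, hr_norm⟩ := h
  choose g hgS hg using fun z : f '' S => z.2
  refine ⟨fun z => r ⟨g z, hgS z⟩, fun z w hzw => ?_, fun z => ?_⟩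
  · rw [← hg z, ← hg w]
    exact hle _ _ (hr_le _ _ hzw)
  · rw [← hg z]
    exact (hr_norm _).trans (hnorm _)

theorem union (hS : ReflectsInto S X) (hT : ReflectsInto T Y) :
    ReflectsInto (S ∪ T) (.sum X Y) := by
  classical
  obtain ⟨f, hf_le, hf_norm⟩ := hS
  obtain ⟨g, hg_le, hg_norm⟩ := hT
  let r (z : ↥(S ∪ T)) : El X ⊕ El Y :=
    if hz : z.1 ∈ S then .inl (f ⟨z, hz⟩) else .inr (g ⟨z, z.2.resolve_left hz⟩)
  refine ⟨r, fun z w (hzw : Sum.LiftRel (le X) (le Y) (r z) (r w)) => ?_, fun z => ?_⟩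
  · dsimp only [r] at hzw
    split_ifs at hzw with hz hw hw
    · exact hf_le _ _ (Sum.liftRel_inl_inl.1 hzw)
    · exact (Sum.not_liftRel_inl_inr hzw).elim
    · exact (Sum.not_liftRel_inr_inl hzw).elim
    · exact hg_le _ _ (Sum.liftRel_inr_inr.1 hzw)
  · change Sum.elim (norm X) (norm Y) (r z) ≤ _
    dsimp only [r]
    split_ifs with hz
    exacts [hf_norm _, hg_norm _]

theorem sumList {ι : Type*} {T : ι → Set (El A)} {X : ι → NMW} :
    ∀ l : List ι, (∀ i ∈ l, ReflectsInto (T i) (X i)) →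
      ReflectsInto {x | ∃ i ∈ l, x ∈ T i} (sumList (l.map X))
  | [], _ => empty.mono fun _ ⟨_, hi, _⟩ => absurd hi List.not_mem_nil
  | [i], h => (h i (List.mem_singleton_self i)).mono fun x ⟨j, hj, hx⟩ =>
      List.mem_singleton.1 hj ▸ hx
  | i :: j :: l, h => by
    have htail := sumList (j :: l) fun i' hi' => h i' (List.mem_cons_of_mem i hi')
    refine ((h i List.mem_cons_self).union htail).mono ?_
    rintro x ⟨i', hi', hx⟩
    rcases List.mem_cons.1 hi' with rfl | hi'
    exacts [.inl hx, .inr ⟨i', hi', hx⟩]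

theorem mset (h : ReflectsInto S X) :
    ReflectsInto (A := .mset A) {m : Multiset (El A) | ∀ x ∈ m, x ∈ S} (.mset X) := by
  obtain ⟨r, hle, hnorm⟩ := h
  have hlift (m : {m : Multiset (El A) | ∀ x ∈ m, x ∈ S}) :
      ∃ k : Multiset S, k.map Subtype.val = m.1 :=
    CanLift.prf (β := Multiset S) m.1 m.2
  choose k hk using hlift
  refine ⟨fun m => (k m).map r, fun m m' hmm' => ?_, fun m => ?_⟩
  · change MsetLE (le A) m.1 m'.1
    rw [← hk m, ← hk m']
    exact MsetLE.map_iff.2 ((MsetLE.map_iff.1 hmm').mono hle)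
  · rw [← hk m]
    simp only [norm, Multiset.map_map, Function.comp_apply]
    exact Multiset.sum_map_le_sum_map _ _ fun x _ => Nat.add_le_add_left (hnorm x) 1

theorem of_factors {C D : NMW} {U : Set (El A)} {S : Set (El B)} {T : Set (El C)}
    (hS : ReflectsInto S X) (hT : ReflectsInto T Y) (hprod : ProdReflectsInto X Y D)
    (f : El A → El B) (g : El A → El C) (hf : Set.MapsTo f U S) (hg : Set.MapsTo g U T)
    (hle : ∀ x y, le B (f x) (f y) → le C (g x) (g y) → le A x y)
    (hnorm : ∀ x, norm B (f x) + norm C (g x) ≤ norm A x) : ReflectsInto U D := by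
  obtain ⟨r, hr_le, hr_norm⟩ := hS
  obtain ⟨q, hq_le, hq_norm⟩ := hT
  obtain ⟨p, hp_le, hp_norm⟩ := hprod
  refine ⟨fun x => p (r ⟨f x, hf x.2⟩) (q ⟨g x, hg x.2⟩), fun x y hxy => ?_, fun x => ?_⟩
  · obtain ⟨hfst, hsnd⟩ := hp_le _ _ _ _ hxy
    exact hle x y (hr_le _ _ hfst) (hq_le _ _ hsnd)
  · exact (hp_norm _ _).trans ((Nat.add_le_add (hr_norm _) (hq_norm _)).trans (hnorm x))

end ReflectsInto

namespace ProdReflectsInto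

variable {A B X : NMW}

theorem swap (h : ProdReflectsInto A B X) : ProdReflectsInto B A X := by
  obtain ⟨p, hle, hnorm⟩ := h
  exact ⟨fun x y => p y x, fun x y x' y' hxy => (hle _ _ _ _ hxy).symm,
    fun x y => (hnorm y x).trans_eq (Nat.add_comm _ _)⟩

theorem mset_sum (A B : NMW) : ProdReflectsInto (.mset A) (.mset B) (.mset (.sum A B)) :=
  ⟨fun (m : Multiset (El A)) (k : Multiset (El B)) =>
    (m.map Sum.inl + k.map Sum.inr : Multiset (El A ⊕ El B)),
    fun _ _ _ _ => msetLE_liftRel_map_add_map_iff.1,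
    fun m k => (norm_mset_sum_map_add_map m k).le⟩

theorem mset_ncopy_succ (B : NMW) :
    ∀ k, ProdReflectsInto (.mset B) (.mset (ncopy B k)) (.mset (ncopy B (k + 1)))
  | 0 => by
    refine ⟨fun m _ => m, fun _ k _ _ h => ⟨h, ?_⟩, fun _ _ => Nat.le_add_right _ _⟩
    obtain rfl : k = (0 : Multiset Empty) := Multiset.eq_zero_of_forall_notMem (nomatch ·)
    exact MsetLE.zero_left _
  | k + 1 => mset_sum B (ncopy B (k + 1))

theorem mapM {g : NMW → NMW} (h : ∀ C, ProdReflectsInto (.mset C) B (.mset (g C))) :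
    ∀ R, ProdReflectsInto R B (mapM g R)
  | .empty => ⟨fun x => x.elim, fun x => x.elim, fun x => x.elim⟩
  | .mset C => h C
  | .sum X Y => by
    obtain ⟨p, hp_le, hp_norm⟩ := mapM h X
    obtain ⟨q, hq_le, hq_norm⟩ := mapM h Y
    refine ⟨fun (z : El X ⊕ El Y) y => Sum.map (p · y) (q · y) z, ?_, ?_⟩
    · rintro (x | x) y (x' | x') y' (hxx' | hxx')
      · exact (hp_le _ _ _ _ hxx').imp_left .inl
      · exact (hq_le _ _ _ _ hxx').imp_left .inr
    · rintro (x | x) y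
      exacts [hp_norm x y, hq_norm x y]

end ProdReflectsInto

theorem exists_list_encoding_mset_ncopy (B : NMW) :
    ∀ k, ∃ enc : List (Multiset (El B)) → El (.mset (ncopy B k)),
      (∀ W W', W.length ≤ k → (0 ∈ W → W.length ≤ W'.length) →
        le (.mset (ncopy B k)) (enc W) (enc W') →
          MsetLE (MsetLE (le B)) (W : Multiset (Multiset (El B))) W') ∧
      ∀ W, norm (.mset (ncopy B k)) (enc W) ≤
        norm (.mset (.mset B)) (W : Multiset (Multiset (El B)))
  | 0 => by
    refine ⟨fun _ => (0 : Multiset Empty), fun W W' hW _ _ => ?_, fun W => Nat.zero_le _⟩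
    obtain rfl := List.length_eq_zero_iff.1 (Nat.le_zero.1 hW)
    exact MsetLE.zero_left _
  | k + 1 => by
    obtain ⟨enc, henc_le, henc_norm⟩ := exists_list_encoding_mset_ncopy B k
    obtain ⟨p, hp_le, hp_norm⟩ := ProdReflectsInto.mset_ncopy_succ B k
    refine ⟨fun W => p (W.headD 0) (enc W.tail), fun W W' hW hzero hle => ?_, fun W => ?_⟩
    · obtain ⟨hhead, htail⟩ := hp_le _ _ _ _ hle
      match W, W' with
      | [], _ => exact MsetLE.zero_left _
      | w :: W, [] =>
        obtain rfl : w = 0 := MsetLE.left_eq_zero hhead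
        exact absurd (hzero List.mem_cons_self) (Nat.not_succ_le_zero _)
      | w :: W, w' :: W' =>
        exact MsetLE.cons hhead (henc_le W W' (Nat.le_of_succ_le_succ hW)
          (fun h => Nat.le_of_succ_le_succ (hzero (List.mem_cons_of_mem w h))) htail)
    · refine (hp_norm _ _).trans ((Nat.add_le_add_left (henc_norm W.tail) _).trans ?_)
      match W with
      | [] => exact Nat.zero_le _
      | w :: W =>
        exact (Nat.add_le_add_right (Nat.le_add_left _ 1) _).trans_eq
          (norm_mset_cons (A := .mset B) w (W : Multiset (Multiset (El B)))).symm

/-- The `k` copies of `B` do not show how many empty multisets a member of `S` contains, so that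
cardinalities have to decide whether these can be matched. -/
theorem ReflectsInto.mset_ncopy {B : NMW} {k : ℕ} {S : Set (Multiset (Multiset (El B)))}
    (hcard : ∀ m ∈ S, m.card ≤ k) (hzero : ∀ m ∈ S, 0 ∈ m → ∀ m' ∈ S, m.card ≤ m'.card) :
    ReflectsInto (A := .mset (.mset B)) S (.mset (ncopy B k)) := by
  obtain ⟨enc, henc_le, henc_norm⟩ := exists_list_encoding_mset_ncopy B k
  have hle : ∀ m ∈ S, ∀ m' ∈ S, le (.mset (ncopy B k)) (enc m.toList) (enc m'.toList) →
      MsetLE (MsetLE (le B)) m m' := fun m hm m' hm' h => by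
    rw [← m.coe_toList, ← m'.coe_toList]
    refine henc_le _ _ (m.length_toList.trans_le (hcard m hm)) (fun h0 => ?_) h
    rw [m.length_toList, m'.length_toList]
    exact hzero m hm (Multiset.mem_toList.1 h0) m' hm'
  exact ⟨fun m => enc (Multiset.toList m.1), fun m m' => hle m.1 m.2 m'.1 m'.2,
    fun m => (henc_norm _).trans_eq (congrArg _ (Multiset.coe_toList _))⟩

open Classical in
/-- The part of `M(M(B))/a` that is reflected into the summand of `R_n(M(M(B)), a)` given by the
`i`-th element `b` of `a`, with `k = n - 1`. For `b = ∅` all elements of a member lie above `b`, and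
their number has to be fixed for them to be stored; it is taken to be the index `i`, which
enumerates the possible cardinalities if the empty elements of `a` come last. -/
def residualPart (B : NMW) (k : ℕ) (b : Multiset (El B)) (i : ℕ) :
    Set (Multiset (Multiset (El B))) :=
  {x | x.countP (MsetLE (le B) b) ≤ k ∧ (b = 0 → x.card = i)}

theorem reflectsInto_residualPart {B R : NMW} (k : ℕ) {b : Multiset (El B)} (i : ℕ)
    (h : ReflectsInto (residual (.mset B) b) R) :
    ReflectsInto (A := .mset (.mset B)) (residualPart B k b i) (.mset (.sum (ncopy B k) R)) := by
  classical
  let above (x : Multiset (Multiset (El B))) := x.filter (MsetLE (le B) b)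
  let notAbove (x : Multiset (Multiset (El B))) := x.filter fun w => ¬ MsetLE (le B) b w
  have hsplit (x) : above x + notAbove x = x := Multiset.filter_add_not _ x
  have hnotAbove : ∀ x, ∀ w ∈ notAbove x, ¬ MsetLE (le B) b w := fun x w hw =>
    (Multiset.mem_filter.1 hw).2
  have hzero_above : ∀ x, 0 ∈ above x → b = 0 := fun x h0 =>
    MsetLE.left_eq_zero (Multiset.of_mem_filter h0)
  have habove_zero (x) (hb : b = 0) : above x = x :=
    Multiset.filter_eq_self.2 fun w _ => hb ▸ MsetLE.zero_left w
  have hstore : ReflectsInto (A := .mset (.mset B)) (above '' residualPart B k b i)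
      (.mset (ncopy B k)) := by
    refine ReflectsInto.mset_ncopy ?_ ?_
    · rintro _ ⟨x, hx, rfl⟩
      exact (Multiset.countP_eq_card_filter _ x).symm.trans_le hx.1
    · rintro _ ⟨x, hx, rfl⟩ h0 _ ⟨y, hy, rfl⟩
      have hb := hzero_above x h0
      rw [habove_zero x hb, habove_zero y hb, hx.2 hb, hy.2 hb]
  refine .of_factors hstore h.mset (.mset_sum _ _) above notAbove (Set.mapsTo_image _ _)
    (fun x _ => hnotAbove x) (fun x y hxy hxy' => ?_) (fun x => ?_)
  · rw [← hsplit x, ← hsplit y]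
    exact MsetLE.add hxy hxy'
  · exact (norm_mset_add _ _).symm.trans_le (congrArg _ (hsplit x)).le

theorem exists_mem_residualPart {B : NMW} {k e : ℕ} {F : List (Multiset (El B))} (hF : 0 ∉ F)
    (hcard : F.length + e ≤ k + 1) {x : Multiset (Multiset (El B))}
    (hx : x ∈ residual (.mset (.mset B))
      ((F ++ List.replicate e 0 : List (Multiset (El B))) : Multiset (Multiset (El B)))) :
    ∃ bi ∈ (F ++ List.replicate e 0).zipIdx, x ∈ residualPart B k bi.1 bi.2 := by
  classical
  by_cases hFx : MsetLE (MsetLE (le B)) (F : Multiset (Multiset (El B))) x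
  · have hlt : x.card < F.length + e := by
      by_contra! hle
      refine hx (MsetLE.add_of_forall_rel hFx (k := Multiset.replicate e 0) ?_ ?_)
      · intro b hb w
        exact Multiset.eq_of_mem_replicate hb ▸ MsetLE.zero_left w
      · simpa using hle
    have hle : F.length ≤ x.card := hFx.card_le
    refine ⟨(0, x.card), List.mem_zipIdx_iff_getElem?.2 ?_, ?_, fun _ => rfl⟩
    · rw [List.getElem?_append_right hle, List.getElem?_replicate_of_lt (by omega)]
    · exact (Multiset.countP_le_card _ x).trans (by omega)
  · obtain ⟨b, hb, hcount⟩ : ∃ b ∈ F, x.countP (MsetLE (le B) b) < F.length := by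
      by_contra! hcount
      exact hFx (MsetLE.of_card_le_countP hcount)
    obtain ⟨i, hi⟩ := List.mem_iff_getElem?.1 (List.mem_append_left (List.replicate e 0) hb)
    exact ⟨(b, i), List.mem_zipIdx_iff_getElem?.2 hi,
      Nat.le_of_lt_succ (hcount.trans_le ((Nat.le_add_right _ _).trans hcard)),
      fun h : b = 0 => absurd (h ▸ hb) hF⟩

theorem exists_residual_mset_mset {n : ℕ} {B : NMW} {R : Multiset (El B) → NMW}
    {a : Multiset (Multiset (El B))} (ha : a.card ≤ n)
    (hrel : ∀ b ∈ a, RRel n (.mset B) b (R b))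
    (hrefl : ∀ b ∈ a, ReflectsInto (residual (.mset B) b) (R b)) :
    ∃ R', RRel n (.mset (.mset B)) a R' ∧ ReflectsInto (residual (.mset (.mset B)) a) R' := by
  obtain ⟨F, e, hF, rfl⟩ := exists_coe_append_replicate 0 a
  have hcard : F.length + e ≤ n - 1 + 1 := by
    have : F.length + e ≤ n := by simpa using ha
    omega
  set L := F ++ List.replicate e 0
  refine ⟨_, .mm L (L.map R) (List.length_map R).symm fun i hi hj => ?_, ?_⟩
  · simpa using hrel _ (List.getElem_mem hi)
  · have hparts := ReflectsInto.sumList (A := .mset (.mset B)) L.zipIdx fun bi hbi =>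
      reflectsInto_residualPart (n - 1) bi.2 (hrefl bi.1 (List.fst_mem_of_mem_zipIdx hbi))
    rw [← List.zipIdx_map_fst 0 L, List.map_map, List.map_map, List.zipIdx_map_fst]
    exact hparts.mono fun x hx => exists_mem_residualPart hF hcard hx

theorem reflectsInto_residual_mset_sum {B₁ B₂ R₁ R₂ : NMW} {a : Multiset (El B₁ ⊕ El B₂)}
    (h₁ : ReflectsInto (residual (.mset B₁) (a.filterMap Sum.getLeft?)) R₁)
    (h₂ : ReflectsInto (residual (.mset B₂) (a.filterMap Sum.getRight?)) R₂) :
    ReflectsInto (residual (.mset (.sum B₁ B₂)) a)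
      (.sum (mapM (fun C => .sum C B₂) R₁) (mapM (fun C => .sum B₁ C) R₂)) := by
  let left (x : Multiset (El B₁ ⊕ El B₂)) : El (.mset B₁) := x.filterMap Sum.getLeft?
  let right (x : Multiset (El B₁ ⊕ El B₂)) : El (.mset B₂) := x.filterMap Sum.getRight?
  have hleft : ReflectsInto (A := .mset (.sum B₁ B₂)) (left ⁻¹' residual (.mset B₁) (left a))
      (mapM (fun C => .sum C B₂) R₁) :=
    .of_factors h₁ (.univ (.mset B₂)) (.mapM (fun C => .mset_sum C B₂) R₁) left right
      (Set.mapsTo_preimage _ _) (Set.mapsTo_univ _ _)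
      (fun x y hl hr => msetLE_liftRel_iff.2 ⟨hl, hr⟩) (fun x => (norm_mset_sum x).ge)
  have hright : ReflectsInto (A := .mset (.sum B₁ B₂)) (right ⁻¹' residual (.mset B₂) (right a))
      (mapM (fun C => .sum B₁ C) R₂) :=
    .of_factors h₂ (.univ (.mset B₁)) (.mapM (fun C => (ProdReflectsInto.mset_sum B₁ C).swap) R₂)
      right left (Set.mapsTo_preimage _ _) (Set.mapsTo_univ _ _)
      (fun x y hr hl => msetLE_liftRel_iff.2 ⟨hl, hr⟩)
      (fun x => ((Nat.add_comm _ _).trans (norm_mset_sum x).symm).le)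
  refine (hleft.union hright).mono fun x hx => ?_
  exact not_and_or.1 fun h => hx (msetLE_liftRel_iff.2 h)

theorem exists_residual_mset {n : ℕ} : ∀ (B : NMW) (a : El (.mset B)), norm (.mset B) a ≤ n →
    ∃ R, RRel n (.mset B) a R ∧ ReflectsInto (residual (.mset B) a) R
  | .empty, (a : Multiset Empty), _ => by
    obtain rfl : a = 0 := Multiset.eq_zero_of_forall_notMem (nomatch ·)
    exact ⟨.empty, .base _, ReflectsInto.empty.mono fun x hx => hx (MsetLE.zero_left x)⟩
  | .sum B₁ B₂, (a : Multiset (El B₁ ⊕ El B₂)), ha => by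
    rw [norm_mset_sum] at ha
    obtain ⟨R₁, hrel₁, hrefl₁⟩ := exists_residual_mset B₁ _ ((Nat.le_add_right _ _).trans ha)
    obtain ⟨R₂, hrel₂, hrefl₂⟩ := exists_residual_mset B₂ _ ((Nat.le_add_left _ _).trans ha)
    exact ⟨_, .msum a hrel₁ hrel₂, reflectsInto_residual_mset_sum hrefl₁ hrefl₂⟩
  | .mset B, (a : Multiset (Multiset (El B))), ha => by
    have : Nonempty NMW := ⟨.empty⟩
    choose! R hrel hrefl using exists_residual_mset (n := n) B
    have hnorm : ∀ b ∈ a, norm (.mset B) b ≤ n := fun b hb => (norm_le_norm_mset hb).trans ha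
    exact exists_residual_mset_mset ((card_le_norm_mset (A := .mset B) a).trans ha)
      (fun b hb => hrel b (hnorm b hb)) (fun b hb => hrefl b (hnorm b hb))

theorem reflectsInto_residual_inl {A B R : NMW} {a : El A} (h : ReflectsInto (residual A a) R) :
    ReflectsInto (residual (.sum A B) (.inl a)) (.sum R B) := by
  have hl : ReflectsInto (A := .sum A B) (Sum.inl '' residual A a) R :=
    h.image (fun _ _ => .inl) fun _ => le_rfl
  have hr : ReflectsInto (A := .sum A B) (Sum.inr '' Set.univ) B :=
    (ReflectsInto.univ B).image (fun _ _ => .inr) fun _ => le_rfl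
  refine (hl.union hr).mono ?_
  rintro (x | x) hx
  exacts [.inl ⟨x, fun hax => hx (.inl hax), rfl⟩, .inr ⟨x, trivial, rfl⟩]

theorem reflectsInto_residual_inr {A B R : NMW} {b : El B} (h : ReflectsInto (residual B b) R) :
    ReflectsInto (residual (.sum A B) (.inr b)) (.sum A R) := by
  have hl : ReflectsInto (A := .sum A B) (Sum.inl '' Set.univ) A :=
    (ReflectsInto.univ A).image (fun _ _ => .inl) fun _ => le_rfl
  have hr : ReflectsInto (A := .sum A B) (Sum.inr '' residual B b) R :=
    h.image (fun _ _ => .inr) fun _ => le_rfl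
  refine (hl.union hr).mono ?_
  rintro (x | x) hx
  exacts [.inl ⟨x, trivial, rfl⟩, .inr ⟨x, fun hbx => hx (.inr hbx), rfl⟩]

end NMW

theorem nmw_residual_reflection_general {n : ℕ} : ∀ (A : NMW) (a : A.El), A.norm a ≤ n →
    ∃ R, NMW.RRel n A a R ∧ NMW.ReflectsInto (NMW.residual A a) R
  | .empty, a, _ => a.elim
  | .mset B, a, ha => NMW.exists_residual_mset B a ha
  | .sum A _, .inl a, ha => by
    obtain ⟨R, hrel, hrefl⟩ := nmw_residual_reflection_general A a ha
    exact ⟨_, .sumL a hrel, NMW.reflectsInto_residual_inl hrefl⟩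
  | .sum _ B, .inr b, hb => by
    obtain ⟨R, hrel, hrefl⟩ := nmw_residual_reflection_general B b hb
    exact ⟨_, .sumR b hrel, NMW.reflectsInto_residual_inr hrefl⟩

/-- Reflection of complements of principal filters in nested multiset
nwqos: for every nested multiset nwqo `A` of one of the forms `M(Γ₀)`, `M(Σ_{i=1}^d B_i)`
with `d ≥ 2`, `M(M(B))`, or `Σ_{i=1}^d M(B_i)` with `d ≥ 2`, every `n ≥ 1` and every
`a ∈ A` with `|a|_A ≤ n`, there exists a reflection `r : A/a ↪ R_n(A,a)`, i.e. a map from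
`A/a = {x ∈ A : a ≰ x}` (with the induced order and norm) into `R_n(A,a)` such that
`r(x) ≤ r(y)` implies `x ≤ y`, and `|r(x)| ≤ |x|` for all `x`. -/
theorem nmw_residual_reflection (n : ℕ) (hn : 1 ≤ n) (A : NMW) (hA : NMW.GoodForm A)
    (a : NMW.El A) (ha : NMW.norm A a ≤ n) :
    ∃ R : NMW, NMW.RRel n A a R ∧
      ∃ r : {x : NMW.El A // ¬ NMW.le A a x} → NMW.El R,
        (∀ x y : {x : NMW.El A // ¬ NMW.le A a x},
            NMW.le R (r x) (r y) → NMW.le A x.1 y.1) ∧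
        (∀ x : {x : NMW.El A // ¬ NMW.le A a x}, NMW.norm R (r x) ≤ NMW.norm A x.1) :=
  nmw_residual_reflection_general A a ha
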